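/- (Anderson–Dritschel–Rovnyak) Let f be analytic on the bidisk 𝔻² with sup_{𝔻²}|f| ≤ 1, let n₁, n₂ be non-negative integers with n = n₁ + n₂ ≥ 2, and let λ = (z,w) ∈ 𝔻², with |λ| := max(|z|,|w|). Then |∂^n f / (∂z^{n₁} ∂w^{n₂})(λ)| ≤ (n−2)! · (1 − |f(λ)|²)/(1 − |λ|)^{n−1} · [ (n₁² − n₁)/(1 − |z|²) + 2 n₁ n₂ / (√(1 − |z|²) √(1 − |w|²)) + (n₂² − n₂)/(1 − |w|²) ]. -/

import Mathlib

/-- The open bidisk in `ℂ × ℂ`. -/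
def Bidisk : Set (ℂ × ℂ) := {lam : ℂ × ℂ | ‖lam.1‖ < 1 ∧ ‖lam.2‖ < 1}

/-!
On a circle, the Cauchy kernel for the derivative of order `m + 1` at `w` is a constant times the
Poisson kernel at `w` times a density `κ` which is bounded by some `K` and whose conjugate extends
to a holomorphic function vanishing at `w`. Bounding the derivative of `F` thus amounts to bounding
the Poisson average of `κ F`, and if `‖κ F‖ ≤ Re ψ` on the circle with `ψ` holomorphic, this
average is at most `Re (ψ w)`.

With `u = conj κ / K` and a constant `a`, the average of `h (conj u)` differs from that of
`h (conj u + 2 a + a² u)` only by `2 a h(w)`, and `|conj u + 2 a + a² u| ≤ 1 + |a|² + 2 Re (a u)`.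
Taking `|a| = |h(w)|` gives Ruscheweyh's inequality
`|h⁽ᵐ⁺¹⁾(w)| ≤ const · (1 - |h(w)|²)` for `|h| ≤ 1`.
If instead `‖F‖ ≤ C (1 - ‖g‖²)` with `g` holomorphic, then `‖F‖ ≤ C Re (1 + ‖g(w)‖² - 2 ⟪g(w), g⟫)`,
so the derivatives of `F` inherit the factor `1 - ‖g(w)‖²`. Mixed derivatives of `f` follow with
`g = f(·, w)` and `F` the derivative of `f` in the second variable.
-/

section HigherSchwarzPick

open Complex Metric Set Filter Topology Real MeasureTheory

open scoped ComplexConjugate Nat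

lemma norm_circleAverage_le_circleAverage_of_norm_le {E : Type*} [NormedAddCommGroup E]
    [NormedSpace ℝ E] {f : ℂ → E} {g : ℂ → ℝ} {c : ℂ} {R : ℝ} (hg : CircleIntegrable g c R)
    (hfg : ∀ ζ ∈ sphere c |R|, ‖f ζ‖ ≤ g ζ) :
    ‖circleAverage f c R‖ ≤ circleAverage g c R := by
  rw [circleAverage_def, circleAverage_def, norm_smul, Real.norm_of_nonneg (by positivity),
    smul_eq_mul]
  gcongr
  exact intervalIntegral.norm_integral_le_of_norm_le two_pi_pos.le
    (.of_forall fun θ _ ↦ hfg _ (circleMap_mem_sphere' c R θ)) hg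

lemma aestronglyMeasurable_deriv_of_eventually {𝕜 E α : Type*} [NontriviallyNormedField 𝕜]
    [NormedAddCommGroup E] [NormedSpace 𝕜 E] [MeasurableSpace α] {μ : Measure α}
    {f : 𝕜 → α → E} {z : 𝕜}
    (hmeas : ∀ᶠ z' in 𝓝 z, AEStronglyMeasurable (f z') μ)
    (hdiff : ∀ᵐ a ∂μ, DifferentiableAt 𝕜 (f · a) z) :
    AEStronglyMeasurable (fun a ↦ deriv (f · a) z) μ := by
  obtain ⟨s, hs⟩ := exists_seq_tendsto (𝓝[≠] z)
  have hs' : Tendsto s atTop (𝓝 z) := hs.mono_right nhdsWithin_le_nhds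
  obtain ⟨N, hN⟩ := eventually_atTop.1 (hs'.eventually hmeas)
  refine aestronglyMeasurable_of_tendsto_ae atTop
    (f := fun n a ↦ slope (f · a) z (s (n + N))) (fun n ↦ ?_) ?_
  · simp only [slope_def_module]
    exact ((hN _ (Nat.le_add_left N n)).sub hmeas.self_of_nhds).const_smul _
  · filter_upwards [hdiff] with a ha
    exact (hasDerivAt_iff_tendsto_slope.1 ha.hasDerivAt).comp
      ((tendsto_add_atTop_iff_nat N).2 hs)

variable {E : Type*} [NormedAddCommGroup E] [NormedSpace ℂ E] {c w : ℂ} {R : ℝ}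

lemma sub_ne_zero_of_mem_sphere_of_mem_ball {ζ : ℂ} (hζ : ζ ∈ sphere c R) (hw : w ∈ ball c R) :
    ζ - w ≠ 0 := by
  intro h
  rw [sub_eq_zero.1 h, mem_sphere] at hζ
  exact (mem_ball.1 hw).ne hζ

lemma poissonKernel_nonneg {ζ : ℂ} (hζ : ζ ∈ sphere c R) (hw : w ∈ ball c R) :
    0 ≤ poissonKernel c w ζ := by
  rw [mem_sphere_iff_norm] at hζ
  rw [mem_ball_iff_norm] at hw
  rw [poissonKernel_def, hζ]
  have : ‖w - c‖ ^ 2 ≤ R ^ 2 := by gcongr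
  exact div_nonneg (sub_nonneg.2 this) (sq_nonneg _)

lemma continuousOn_poissonKernel_sphere (hw : w ∈ ball c R) :
    ContinuousOn (poissonKernel c w) (sphere c R) := by
  have h (ζ) (hζ : ζ ∈ sphere c R) : ‖ζ - c - (w - c)‖ ^ 2 ≠ 0 := by
    rw [sub_sub_sub_cancel_right]
    exact pow_ne_zero 2 (norm_ne_zero_iff.2 (sub_ne_zero_of_mem_sphere_of_mem_ball hζ hw))
  unfold poissonKernel
  exact ContinuousOn.div (by fun_prop) (by fun_prop) h

lemma norm_circleAverage_poissonKernel_smul_le_re {f : ℂ → E} {ψ : ℂ → ℂ} (hw : w ∈ ball c R)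
    (hψ : DiffContOnCl ℂ ψ (ball c R)) (hfψ : ∀ ζ ∈ sphere c R, ‖f ζ‖ ≤ (ψ ζ).re) :
    ‖circleAverage (poissonKernel c w • f) c R‖ ≤ (ψ w).re := by
  have hR : 0 < R := pos_of_mem_ball hw
  have hψc : ContinuousOn ψ (sphere c R) := hψ.continuousOn_ball.mono sphere_subset_closedBall
  have hP := continuousOn_poissonKernel_sphere hw
  have hPψ : CircleIntegrable (poissonKernel c w • ψ) c R := (hP.smul hψc).circleIntegrable hR.le
  calc ‖circleAverage (poissonKernel c w • f) c R‖
      ≤ circleAverage (fun ζ ↦ poissonKernel c w ζ * (ψ ζ).re) c R := by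
        refine norm_circleAverage_le_circleAverage_of_norm_le
          ((hP.mul (continuous_re.comp_continuousOn hψc)).circleIntegrable hR.le) fun ζ hζ ↦ ?_
        rw [abs_of_pos hR] at hζ
        rw [Pi.smul_apply', norm_smul, Real.norm_of_nonneg (poissonKernel_nonneg hζ hw)]
        exact mul_le_mul_of_nonneg_left (hfψ ζ hζ) (poissonKernel_nonneg hζ hw)
    _ = circleAverage (reCLM ∘ (poissonKernel c w • ψ)) c R := by
        congr! 2 with ζ
        simp
    _ = (ψ w).re := by
        rw [reCLM.circleAverage_comp_comm hPψ, hψ.circleAverage_poissonKernel_smul hw, reCLM_apply]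

lemma norm_conj_add_two_mul_add_sq_mul_le {u : ℂ} (hu : ‖u‖ ≤ 1) (a : ℂ) :
    ‖conj u + 2 * a + a ^ 2 * u‖ ≤ 1 + ‖a‖ ^ 2 + 2 * (a * u).re := by
  have hfac : conj u + 2 * a + a ^ 2 * u = (1 + a * u) * (conj u + a) + a * (1 - ‖u‖ ^ 2) := by
    rw [← conj_mul']
    ring
  have h₁ : ‖1 + a * u‖ ^ 2 = 1 + ‖a‖ ^ 2 * ‖u‖ ^ 2 + 2 * (a * u).re := by
    simp only [← normSq_eq_norm_sq, normSq_apply, add_re, one_re, mul_re, add_im, one_im, mul_im]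
    ring
  have h₂ : ‖conj u + a‖ ^ 2 = ‖u‖ ^ 2 + ‖a‖ ^ 2 + 2 * (a * u).re := by
    simp only [← normSq_eq_norm_sq, normSq_apply, add_re, mul_re, add_im, conj_re, conj_im]
    ring
  have h₃ : ‖a * (1 - ‖u‖ ^ 2 : ℂ)‖ = ‖a‖ * (1 - ‖u‖ ^ 2) := by
    rw [norm_mul, ← ofReal_one, ← ofReal_pow, ← ofReal_sub, norm_real, Real.norm_of_nonneg]
    nlinarith [norm_nonneg u]
  calc ‖conj u + 2 * a + a ^ 2 * u‖
      ≤ ‖1 + a * u‖ * ‖conj u + a‖ + ‖a‖ * (1 - ‖u‖ ^ 2) := by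
        rw [hfac, ← norm_mul, ← h₃]
        exact norm_add_le _ _
    _ ≤ (‖1 + a * u‖ ^ 2 + ‖conj u + a‖ ^ 2) / 2 + (1 + ‖a‖ ^ 2) / 2 * (1 - ‖u‖ ^ 2) := by
        have hu' : 0 ≤ 1 - ‖u‖ ^ 2 := by nlinarith [norm_nonneg u]
        gcongr
        · linarith [two_mul_le_add_sq ‖1 + a * u‖ ‖conj u + a‖]
        · linarith [two_mul_le_add_sq 1 ‖a‖]
    _ = 1 + ‖a‖ ^ 2 + 2 * (a * u).re := by
        rw [h₁, h₂]
        ring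

lemma circleAverage_poissonKernel_smul_mul_conj_add {h u : ℂ → ℂ} (hw : w ∈ ball c R)
    (hh : DiffContOnCl ℂ h (ball c R)) (hu : DiffContOnCl ℂ u (ball c R)) (a b : ℂ) :
    circleAverage (poissonKernel c w • fun ζ ↦ h ζ * (conj (u ζ) + a + b * u ζ)) c R =
      circleAverage (poissonKernel c w • fun ζ ↦ h ζ * conj (u ζ)) c R +
        h w * (a + b * u w) := by
  have hR : 0 ≤ R := (pos_of_mem_ball hw).le
  have hP := continuousOn_poissonKernel_sphere hw
  have hhc := hh.continuousOn_ball.mono sphere_subset_closedBall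
  have huc := hu.continuousOn_ball.mono sphere_subset_closedBall
  have hhol : DiffContOnCl ℂ (fun ζ ↦ h ζ * (a + b * u ζ)) (ball c R) :=
    hh.smul ((hu.const_smul b).const_add a)
  have hsplit : (poissonKernel c w • fun ζ ↦ h ζ * (conj (u ζ) + a + b * u ζ)) =
      (poissonKernel c w • fun ζ ↦ h ζ * conj (u ζ)) +
        poissonKernel c w • fun ζ ↦ h ζ * (a + b * u ζ) := by
    rw [← smul_add]
    congr 1 with ζ
    simp only [Pi.add_apply]
    ring
  rw [hsplit, circleAverage_add, hhol.circleAverage_poissonKernel_smul hw]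
  · exact (hP.smul (hhc.mul (continuous_conj.comp_continuousOn huc))).circleIntegrable hR
  · exact (hP.smul (hhol.continuousOn_ball.mono sphere_subset_closedBall)).circleIntegrable hR

lemma norm_circleAverage_poissonKernel_smul_mul_conj_le {h u : ℂ → ℂ} (hw : w ∈ ball c R)
    (hh : DiffContOnCl ℂ h (ball c R)) (hu : DiffContOnCl ℂ u (ball c R))
    (hh₁ : ∀ ζ ∈ sphere c R, ‖h ζ‖ ≤ 1) (hu₁ : ∀ ζ ∈ sphere c R, ‖u ζ‖ ≤ 1) (huw : u w = 0) :
    ‖circleAverage (poissonKernel c w • fun ζ ↦ h ζ * conj (u ζ)) c R‖ ≤ 1 - ‖h w‖ ^ 2 := by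
  set X := circleAverage (poissonKernel c w • fun ζ ↦ h ζ * conj (u ζ)) c R with hX
  obtain ⟨β, hβ, hβX⟩ := RCLike.exists_norm_mul_eq_self X
  -- With this choice of `a` the two terms of `X + 2 * a * h w` have the same argument.
  set a := β * conj (h w) with ha
  have hnorm_a : ‖a‖ = ‖h w‖ := by rw [ha, norm_mul, hβ, one_mul, RCLike.norm_conj]
  have havg : circleAverage (poissonKernel c w •
      fun ζ ↦ h ζ * (conj (u ζ) + 2 * a + a ^ 2 * u ζ)) c R = β * (‖X‖ + 2 * ‖h w‖ ^ 2 : ℝ) := by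
    rw [circleAverage_poissonKernel_smul_mul_conj_add hw hh hu, ← hX, huw, ha]
    push_cast
    linear_combination 2 * β * conj_mul' (h w) - hβX
  have hψ : DiffContOnCl ℂ (fun ζ ↦ ((1 + ‖h w‖ ^ 2 : ℝ) : ℂ) + (2 : ℝ) * (a * u ζ)) (ball c R) :=
    ((hu.const_smul a).const_smul ((2 : ℝ) : ℂ)).const_add _
  have hmaj := norm_circleAverage_poissonKernel_smul_le_re
    (f := fun ζ ↦ h ζ * (conj (u ζ) + 2 * a + a ^ 2 * u ζ)) hw hψ fun ζ hζ ↦ by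
      rw [norm_mul, add_re, ofReal_re, re_ofReal_mul, ← hnorm_a]
      exact (mul_le_of_le_one_left (norm_nonneg _) (hh₁ ζ hζ)).trans
        (norm_conj_add_two_mul_add_sq_mul_le (hu₁ ζ hζ) a)
  rw [havg, norm_mul, hβ, one_mul, norm_real, Real.norm_of_nonneg (by positivity), huw, mul_zero,
    mul_zero, add_zero, ofReal_re] at hmaj
  linarith

variable {F : ℂ → E}

lemma circleAverage_sub_div_smul (hR : 0 < R) (g : ℂ → ℂ) (F : ℂ → E) :
    circleAverage (fun ζ ↦ ((ζ - c) / g ζ) • F ζ) c R =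
      (2 * π * I)⁻¹ • ∮ ζ in C(c, R), (g ζ)⁻¹ • F ζ := by
  rw [circleAverage_eq_circleIntegral hR.ne']
  congr 1
  refine circleIntegral.integral_congr hR.le fun ζ hζ ↦ ?_
  have : ζ - c ≠ 0 := sub_ne_zero_of_mem_sphere_of_mem_ball hζ (mem_ball_self hR)
  simp only [smul_smul]
  congr 1
  field_simp

lemma circleIntegral_inv_sub_pow_smul_deriv [CompleteSpace E] {U : Set ℂ} (hU : IsOpen U)
    (hRU : sphere c R ⊆ U) (hF : DifferentiableOn ℂ F U) (hw : w ∈ ball c R) (n : ℕ) :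
    (∮ ζ in C(c, R), ((ζ - w) ^ (n + 1))⁻¹ • deriv F ζ) =
      (n + 1 : ℂ) • ∮ ζ in C(c, R), ((ζ - w) ^ (n + 2))⁻¹ • F ζ := by
  have hR := (pos_of_mem_ball hw).le
  have hne (ζ) (hζ : ζ ∈ sphere c R) := sub_ne_zero_of_mem_sphere_of_mem_ball hζ hw
  have hint {G : ℂ → E} (hG : DifferentiableOn ℂ G U) (k : ℕ) :
      CircleIntegrable (fun ζ ↦ ((ζ - w) ^ k)⁻¹ • G ζ) c R :=
    (((by fun_prop : ContinuousOn (fun ζ ↦ (ζ - w) ^ k) _).inv₀ fun ζ hζ ↦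
      pow_ne_zero k (hne ζ hζ)).smul (hG.continuousOn.mono hRU)).circleIntegrable hR
  rw [← circleIntegral.integral_smul, ← sub_eq_zero]
  simp_rw [smul_comm (n + 1 : ℂ)]
  rw [← circleIntegral.integral_sub (hint (hF.deriv hU) (n + 1))
    (hint (hF.fun_const_smul (n + 1 : ℂ)) (n + 2))]
  refine circleIntegral.integral_eq_zero_of_hasDerivWithinAt
    (f := fun ζ ↦ ((ζ - w) ^ (n + 1))⁻¹ • F ζ) hR fun ζ hζ ↦ HasDerivAt.hasDerivWithinAt ?_
  have hFζ := (hF.differentiableAt (hU.mem_nhds (hRU hζ))).hasDerivAt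
  have hpow : HasDerivAt (fun ζ ↦ ((ζ - w) ^ (n + 1))⁻¹)
      (-((n + 1) * ((ζ - w) ^ (n + 2))⁻¹)) ζ := by
    refine (((hasDerivAt_id ζ).sub_const w).pow (n + 1)).inv
      (pow_ne_zero _ (hne ζ hζ)) |>.congr_deriv ?_
    have := hne ζ hζ
    simp only [id, Pi.pow_apply, Nat.add_sub_cancel]
    push_cast
    field_simp
    ring
  refine (hpow.smul hFζ).congr_deriv ?_
  rw [neg_smul, ← sub_eq_add_neg, mul_smul, smul_comm]

lemma circleAverage_sub_div_sub_pow_smul_deriv [CompleteSpace E] {U : Set ℂ} (hU : IsOpen U)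
    (hRU : sphere c R ⊆ U) (hF : DifferentiableOn ℂ F U) (hw : w ∈ ball c R) (n : ℕ) :
    circleAverage (fun ζ ↦ ((ζ - c) / (ζ - w) ^ (n + 1)) • deriv F ζ) c R =
      (n + 1 : ℂ) • circleAverage (fun ζ ↦ ((ζ - c) / (ζ - w) ^ (n + 2)) • F ζ) c R := by
  have hR := pos_of_mem_ball hw
  rw [circleAverage_sub_div_smul hR, circleAverage_sub_div_smul hR,
    circleIntegral_inv_sub_pow_smul_deriv hU hRU hF hw, smul_comm]

theorem circleAverage_sub_div_sub_pow_smul [CompleteSpace E] {U : Set ℂ} (hU : IsOpen U)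
    (hRU : closedBall c R ⊆ U) (hF : DifferentiableOn ℂ F U) (hw : w ∈ ball c R) (n : ℕ) :
    circleAverage (fun ζ ↦ ((ζ - c) / (ζ - w) ^ (n + 1)) • F ζ) c R =
      (n ! : ℂ)⁻¹ • iteratedDeriv n F w := by
  induction n generalizing F with
  | zero =>
    have hR : |R| = R := abs_of_pos (pos_of_mem_ball hw)
    have hF' : DiffContOnCl ℂ F (ball c |R|) := by
      rw [hR]
      exact hF.diffContOnCl_ball hRU
    simpa using hF'.circleAverage_smul_div (w := w) (by rwa [hR])
  | succ n ih =>
    have hparts := circleAverage_sub_div_sub_pow_smul_deriv hU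
      (sphere_subset_closedBall.trans hRU) hF hw n
    rw [ih (hF.deriv hU), ← iteratedDeriv_succ'] at hparts
    rw [Nat.factorial_succ, Nat.cast_mul, Nat.cast_succ, mul_inv, mul_smul, hparts,
      inv_smul_smul₀ (Nat.cast_add_one_ne_zero n)]

/-- The density, with respect to `poissonKernel c w`, of the Cauchy kernel for the derivative of
order `m + 1` at `w`, up to the constant factor `R ^ 2 - ‖w - c‖ ^ 2`. -/
noncomputable def derivKernel (c w : ℂ) (m : ℕ) (ζ : ℂ) : ℂ :=
  (ζ - c) * conj (ζ - w) / (ζ - w) ^ (m + 1)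

lemma norm_derivKernel_le {ζ : ℂ} (hζ : ζ ∈ sphere c R) (hw : w ∈ ball c R) (m : ℕ) :
    ‖derivKernel c w m ζ‖ ≤ R / (R - ‖w - c‖) ^ m := by
  have hne := norm_ne_zero_iff.2 (sub_ne_zero_of_mem_sphere_of_mem_ball hζ hw)
  rw [mem_sphere_iff_norm] at hζ
  rw [mem_ball_iff_norm] at hw
  have hR : 0 ≤ R := hζ ▸ norm_nonneg _
  have hdist : R - ‖w - c‖ ≤ ‖ζ - w‖ := by
    simpa [hζ] using norm_sub_norm_le (ζ - c) (w - c)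
  calc ‖derivKernel c w m ζ‖ = R / ‖ζ - w‖ ^ m := by
        rw [derivKernel, norm_div, norm_mul, RCLike.norm_conj, norm_pow, hζ]
        field_simp
        ring
    _ ≤ R / (R - ‖w - c‖) ^ m := by
        have := pow_pos (sub_pos.2 hw) m
        have := pow_le_pow_left₀ (sub_pos.2 hw).le hdist m
        gcongr

lemma poissonKernel_mul_derivKernel {ζ : ℂ} (hζ : ζ ∈ sphere c R) (hw : w ∈ ball c R) (m : ℕ) :
    poissonKernel c w ζ * derivKernel c w m ζ =
      (R ^ 2 - ‖w - c‖ ^ 2 : ℝ) * ((ζ - c) / (ζ - w) ^ (m + 2)) := by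
  have hne := sub_ne_zero_of_mem_sphere_of_mem_ball hζ hw
  have hne' : conj (ζ - w) ≠ 0 := (map_ne_zero _).2 hne
  rw [mem_sphere_iff_norm] at hζ
  rw [poissonKernel_def, derivKernel, hζ, sub_sub_sub_cancel_right, ofReal_div,
    ofReal_pow ‖ζ - w‖, ← mul_conj']
  field_simp
  ring

lemma circleAverage_poissonKernel_smul_derivKernel_smul [CompleteSpace E] {U : Set ℂ}
    (hU : IsOpen U) (hRU : closedBall c R ⊆ U) (hF : DifferentiableOn ℂ F U) (hw : w ∈ ball c R)
    (m : ℕ) :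
    circleAverage (poissonKernel c w • derivKernel c w m • F) c R =
      (R ^ 2 - ‖w - c‖ ^ 2) • ((m + 1)! : ℂ)⁻¹ • iteratedDeriv (m + 1) F w := by
  rw [← circleAverage_sub_div_sub_pow_smul hU hRU hF hw, ← circleAverage_smul]
  refine circleAverage_congr_sphere fun ζ hζ ↦ ?_
  rw [abs_of_pos (pos_of_mem_ball hw)] at hζ
  simp only [Pi.smul_apply', Pi.smul_apply, ← coe_smul (_ : ℝ), smul_smul]
  rw [poissonKernel_mul_derivKernel hζ hw]

lemma exists_diffContOnCl_eqOn_conj_derivKernel (hw : w ∈ ball c R) (m : ℕ) :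
    ∃ u : ℂ → ℂ, DiffContOnCl ℂ u (ball c R) ∧ u w = 0 ∧
      ∀ ζ ∈ sphere c R, u ζ = conj (derivKernel c w m ζ) := by
  have hR := pos_of_mem_ball hw
  have hwR := mem_ball_iff_norm.1 hw
  have hden (ζ) (hζ : ζ ∈ closedBall c R) : R ^ 2 - conj (w - c) * (ζ - c) ≠ 0 := by
    refine sub_ne_zero.2 fun h ↦ ?_
    have hnorm : R ^ 2 = ‖w - c‖ * ‖ζ - c‖ := by
      simpa [abs_of_pos hR, - map_sub] using congrArg norm h
    nlinarith [mem_closedBall_iff_norm.1 hζ, norm_nonneg (w - c)]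
  refine ⟨fun ζ ↦ R ^ 2 * (ζ - w) * (ζ - c) ^ m / (R ^ 2 - conj (w - c) * (ζ - c)) ^ (m + 1),
    DifferentiableOn.diffContOnCl ?_, by simp, fun ζ hζ ↦ ?_⟩
  · rw [closure_ball c hR.ne']
    exact DifferentiableOn.div (by fun_prop) (by fun_prop) fun ζ hζ ↦ pow_ne_zero _ (hden ζ hζ)
  · have hζc : conj (ζ - c) * (ζ - c) = R ^ 2 := by
      rw [conj_mul', mem_sphere_iff_norm.1 hζ]
    have hc := sub_ne_zero_of_mem_sphere_of_mem_ball hζ (mem_ball_self hR)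
    have hc' := (map_ne_zero (starRingEnd ℂ)).2 hc
    have hw' := (map_ne_zero (starRingEnd ℂ)).2 (sub_ne_zero_of_mem_sphere_of_mem_ball hζ hw)
    have hfac : R ^ 2 - conj (w - c) * (ζ - c) = conj (ζ - w) * (ζ - c) := by
      rw [← hζc]
      simp only [map_sub]
      ring
    simp only [derivKernel, map_div₀, map_mul, map_pow, conj_conj]
    rw [hfac, mul_pow, ← hζc]
    field_simp
    ring

lemma norm_iteratedDeriv_succ_le_of_norm_circleAverage_le [CompleteSpace E] {A : ℝ} {m : ℕ}
    (hF : DifferentiableOn ℂ F (ball c R)) (hw : w ∈ ball c R)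
    (hA : ∀ r ∈ Ioo ‖w - c‖ R,
      ‖circleAverage (poissonKernel c w • derivKernel c w m • F) c r‖ ≤
        r / (r - ‖w - c‖) ^ m * A) :
    ‖iteratedDeriv (m + 1) F w‖ ≤
      (m + 1)! * R / ((R ^ 2 - ‖w - c‖ ^ 2) * (R - ‖w - c‖) ^ m) * A := by
  have hwR := mem_ball_iff_norm.1 hw
  have hbound (r) (hr : r ∈ Ioo ‖w - c‖ R) : ‖iteratedDeriv (m + 1) F w‖ *
      ((r ^ 2 - ‖w - c‖ ^ 2) * (r - ‖w - c‖) ^ m) ≤ (m + 1)! * r * A := by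
    have hpos : 0 < r - ‖w - c‖ := sub_pos.2 hr.1
    have hsq : 0 < r ^ 2 - ‖w - c‖ ^ 2 := by nlinarith [norm_nonneg (w - c)]
    have := hA r hr
    rw [circleAverage_poissonKernel_smul_derivKernel_smul isOpen_ball
      (closedBall_subset_ball hr.2) hF (mem_ball_iff_norm.2 hr.1), norm_smul, norm_smul, norm_inv,
      Complex.norm_natCast, Real.norm_of_nonneg hsq.le, div_mul_eq_mul_div,
      le_div_iff₀ (by positivity)] at this
    field_simp at this
    linarith
  have hlim : ‖iteratedDeriv (m + 1) F w‖ *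
      ((R ^ 2 - ‖w - c‖ ^ 2) * (R - ‖w - c‖) ^ m) ≤ (m + 1)! * R * A := by
    refine le_of_tendsto_of_tendsto (b := 𝓝[<] R) ?_ ?_
      (Filter.eventually_of_mem (Ioo_mem_nhdsLT hwR) hbound)
    all_goals exact ContinuousAt.continuousWithinAt (by fun_prop)
  have : 0 < R - ‖w - c‖ := sub_pos.2 hwR
  have : 0 < R ^ 2 - ‖w - c‖ ^ 2 := by nlinarith [norm_nonneg (w - c)]
  rw [div_mul_eq_mul_div, le_div_iff₀ (by positivity)]
  exact hlim

theorem norm_iteratedDeriv_succ_le_one_sub_sq {h : ℂ → ℂ} (hh : DifferentiableOn ℂ h (ball c R))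
    (hh₁ : ∀ ζ ∈ ball c R, ‖h ζ‖ ≤ 1) (hw : w ∈ ball c R) (m : ℕ) :
    ‖iteratedDeriv (m + 1) h w‖ ≤
      (m + 1)! * R / ((R ^ 2 - ‖w - c‖ ^ 2) * (R - ‖w - c‖) ^ m) * (1 - ‖h w‖ ^ 2) := by
  refine norm_iteratedDeriv_succ_le_of_norm_circleAverage_le hh hw fun r ⟨hwr, hrR⟩ ↦ ?_
  have hwr' := mem_ball_iff_norm.2 hwr
  have hr : 0 < r := pos_of_mem_ball hwr'
  have hsub := closedBall_subset_ball (x := c) hrR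
  set K := r / (r - ‖w - c‖) ^ m
  have hK₀ : 0 < K := div_pos hr (pow_pos (sub_pos.2 hwr) m)
  obtain ⟨u, hu, huw, huκ⟩ := exists_diffContOnCl_eqOn_conj_derivKernel hwr' m
  have hu₁ (ζ) (hζ : ζ ∈ sphere c r) : ‖(K : ℂ)⁻¹ * u ζ‖ ≤ 1 := by
    rw [huκ ζ hζ, norm_mul, RCLike.norm_conj, norm_inv, norm_real, Real.norm_of_nonneg hK₀.le,
      inv_mul_le_one₀ hK₀]
    exact norm_derivKernel_le hζ hwr' m
  have hmain := norm_circleAverage_poissonKernel_smul_mul_conj_le hwr'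
    (hh.diffContOnCl_ball hsub) (hu.const_smul (K : ℂ)⁻¹)
    (fun ζ hζ ↦ hh₁ ζ (hsub (sphere_subset_closedBall hζ))) hu₁ (by simp [huw])
  have havg : circleAverage (poissonKernel c w • derivKernel c w m • h) c r = K •
      circleAverage (poissonKernel c w • fun ζ ↦ h ζ * conj (((K : ℂ)⁻¹ • u) ζ)) c r := by
    rw [← circleAverage_smul]
    refine circleAverage_congr_sphere fun ζ hζ ↦ ?_
    rw [abs_of_pos hr] at hζ
    have : (K : ℂ) ≠ 0 := ofReal_ne_zero.2 hK₀.ne'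
    simp only [Pi.smul_apply', Pi.smul_apply, Pi.mul_apply, smul_eq_mul, real_smul, map_mul,
      map_inv₀, conj_ofReal, huκ ζ hζ, conj_conj]
    field_simp
  rw [havg, norm_smul, Real.norm_of_nonneg hK₀.le]
  gcongr

lemma norm_iteratedDeriv_succ_le_of_norm_le_one_sub_sq [CompleteSpace E] {H : Type*}
    [NormedAddCommGroup H] [InnerProductSpace ℂ H] {g : ℂ → H} {C : ℝ} (hC : 0 ≤ C)
    (hF : DifferentiableOn ℂ F (ball c R)) (hg : DifferentiableOn ℂ g (ball c R))
    (hFg : ∀ ζ ∈ ball c R, ‖F ζ‖ ≤ C * (1 - ‖g ζ‖ ^ 2)) (hw : w ∈ ball c R) (m : ℕ) :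
    ‖iteratedDeriv (m + 1) F w‖ ≤
      (m + 1)! * R / ((R ^ 2 - ‖w - c‖ ^ 2) * (R - ‖w - c‖) ^ m) * (C * (1 - ‖g w‖ ^ 2)) := by
  refine norm_iteratedDeriv_succ_le_of_norm_circleAverage_le hF hw fun r ⟨hwr, hrR⟩ ↦ ?_
  have hwr' := mem_ball_iff_norm.2 hwr
  have hsub := closedBall_subset_ball (x := c) hrR
  set K := r / (r - ‖w - c‖) ^ m
  have hK₀ : 0 ≤ K := div_nonneg (pos_of_mem_ball hwr').le (pow_nonneg (sub_nonneg.2 hwr.le) m)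
  let ψ (ζ : ℂ) : ℂ := (K * C : ℝ) * ((1 + ‖g w‖ ^ 2 : ℝ) - (2 : ℝ) * inner ℂ (g w) (g ζ))
  have hψre (ζ) : (ψ ζ).re = K * (C * (1 + ‖g w‖ ^ 2 - 2 * (inner ℂ (g w) (g ζ)).re)) := by
    simp only [ψ, re_ofReal_mul, sub_re, ofReal_re]
    ring
  have hψ : DiffContOnCl ℂ ψ (ball c r) := by
    have hinner : DifferentiableOn ℂ (fun ζ ↦ inner ℂ (g w) (g ζ)) (ball c R) :=
      (innerSL ℂ (g w)).differentiable.comp_differentiableOn hg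
    refine DifferentiableOn.diffContOnCl_ball (U := ball c R) ?_ hsub
    fun_prop
  calc _ ≤ (ψ w).re := by
        refine norm_circleAverage_poissonKernel_smul_le_re hwr' hψ fun ζ hζ ↦ ?_
        rw [hψre, Pi.smul_apply', norm_smul]
        refine mul_le_mul (norm_derivKernel_le hζ hwr' m)
          ((hFg ζ (hsub (sphere_subset_closedBall hζ))).trans ?_) (norm_nonneg _) hK₀
        have hsq := norm_sub_sq (𝕜 := ℂ) (g w) (g ζ)
        rw [RCLike.re_to_complex] at hsq
        exact mul_le_mul_of_nonneg_left (by linarith [sq_nonneg ‖g w - g ζ‖]) hC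
    _ = K * (C * (1 - ‖g w‖ ^ 2)) := by
        rw [hψre, inner_self_eq_norm_sq_to_K, RCLike.ofReal_eq_complex_ofReal, ← ofReal_pow,
          ofReal_re]
        ring

lemma differentiableOn_integral_of_dominated {α : Type*} [MeasurableSpace α]
    {μ : Measure α} {f : ℂ → α → E} {bound : α → ℝ} {U : Set ℂ} (hU : IsOpen U)
    (hmeas : ∀ z ∈ U, AEStronglyMeasurable (f z) μ)
    (hdiff : ∀ᵐ a ∂μ, DifferentiableOn ℂ (f · a) U) (hbound : Integrable bound μ)
    (hf : ∀ᵐ a ∂μ, ∀ z ∈ U, ‖f z a‖ ≤ bound a) :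
    DifferentiableOn ℂ (fun z ↦ ∫ a, f z a ∂μ) U := by
  intro z hz
  obtain ⟨ε, hε, hεU⟩ := Metric.isOpen_iff.1 hU z hz
  have hsub {x : ℂ} (hx : x ∈ ball z (ε / 2)) : closedBall x (ε / 2) ⊆ U :=
    (closedBall_subset_ball' (by linarith [mem_ball.1 hx])).trans hεU
  have hU_mem : U ∈ 𝓝 z := hU.mem_nhds hz
  have hderiv : ∀ᵐ a ∂μ, ∀ x ∈ ball z (ε / 2), ‖deriv (f · a) x‖ ≤ bound a / (ε / 2) := by
    filter_upwards [hdiff, hf] with a ha hfa x hx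
    exact norm_deriv_le_of_forall_mem_sphere_norm_le (by positivity)
      (ha.diffContOnCl_ball (hsub hx)) fun y hy ↦ hfa y (hsub hx (sphere_subset_closedBall hy))
  refine (hasDerivAt_integral_of_dominated_loc_of_deriv_le (F' := fun x a ↦ deriv (f · a) x)
    (ball_mem_nhds z (by positivity)) (eventually_of_mem hU_mem hmeas)
    (hbound.mono' (hmeas z hz) (hf.mono fun a ha ↦ ha z hz))
    (aestronglyMeasurable_deriv_of_eventually (eventually_of_mem hU_mem hmeas)
      (hdiff.mono fun a ha ↦ ha.differentiableAt hU_mem)) hderiv (hbound.div_const _)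
    ?_).2.differentiableAt.differentiableWithinAt
  filter_upwards [hdiff] with a ha x hx
  exact (ha.differentiableAt
    (hU.mem_nhds (hsub hx (mem_closedBall_self (by positivity))))).hasDerivAt

lemma differentiableOn_circleAverage {f : ℂ → ℂ → E} {U : Set ℂ} {M : ℝ}
    (hU : IsOpen U) (hcont : ∀ z ∈ U, ContinuousOn (f z) (sphere c |R|))
    (hdiff : ∀ ζ ∈ sphere c |R|, DifferentiableOn ℂ (f · ζ) U)
    (hM : ∀ z ∈ U, ∀ ζ ∈ sphere c |R|, ‖f z ζ‖ ≤ M) :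
    DifferentiableOn ℂ (fun z ↦ circleAverage (f z) c R) U := by
  simp only [circleAverage_def, intervalIntegral.integral_of_le two_pi_pos.le]
  refine (differentiableOn_integral_of_dominated hU (fun z hz ↦ ?_)
    (.of_forall fun θ ↦ hdiff _ (circleMap_mem_sphere' c R θ))
    (integrable_const M) (.of_forall fun θ z hz ↦
      hM z hz _ (circleMap_mem_sphere' c R θ))).const_smul _
  exact ((hcont z hz).comp_continuous (continuous_circleMap c R)
    (circleMap_mem_sphere' c R)).aestronglyMeasurable

lemma differentiableOn_iteratedDeriv_param [CompleteSpace E] {f : ℂ → ℂ → E} {U V : Set ℂ} {M : ℝ}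
    (hU : IsOpen U) (hV : IsOpen V) (hf₁ : ∀ ζ ∈ V, DifferentiableOn ℂ (f · ζ) U)
    (hf₂ : ∀ z ∈ U, DifferentiableOn ℂ (f z) V) (hM : ∀ z ∈ U, ∀ ζ ∈ V, ‖f z ζ‖ ≤ M)
    (hw : w ∈ V) (n : ℕ) :
    DifferentiableOn ℂ (fun z ↦ iteratedDeriv n (f z) w) U := by
  obtain ⟨r, hr, hrV⟩ := nhds_basis_closedBall.mem_iff.1 (hV.mem_nhds hw)
  have hsphere : sphere w |r| ⊆ V := by
    rw [abs_of_pos hr]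
    exact sphere_subset_closedBall.trans hrV
  have hne (ζ) (hζ : ζ ∈ sphere w |r|) : (ζ - w) ^ (n + 1) ≠ 0 := by
    rw [abs_of_pos hr] at hζ
    exact pow_ne_zero _ (sub_ne_zero_of_mem_sphere_of_mem_ball hζ (mem_ball_self hr))
  have hcauchy : DifferentiableOn ℂ
      (fun z ↦ circleAverage (fun ζ ↦ ((ζ - w) / (ζ - w) ^ (n + 1)) • f z ζ) w r) U := by
    refine differentiableOn_circleAverage (M := r / r ^ (n + 1) * M) hU (fun z hz ↦ ?_)
      (fun ζ hζ ↦ (hf₁ ζ (hsphere hζ)).const_smul _) fun z hz ζ hζ ↦ ?_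
    · exact (ContinuousOn.div (by fun_prop) (by fun_prop) hne).smul
        ((hf₂ z hz).continuousOn.mono hsphere)
    · rw [norm_smul, norm_div, norm_pow, mem_sphere_iff_norm.1 hζ, abs_of_pos hr]
      gcongr
      exact hM z hz ζ (hsphere hζ)
  refine (hcauchy.const_smul (n ! : ℂ)).congr fun z hz ↦ ?_
  rw [Pi.smul_apply, circleAverage_sub_div_sub_pow_smul hV hrV (hf₂ z hz) (mem_ball_self hr),
    smul_inv_smul₀ (Nat.cast_ne_zero.2 n.factorial_ne_zero)]

theorem norm_iteratedDeriv_iteratedDeriv_succ_le {f : ℂ → ℂ → ℂ} {c₁ c₂ z : ℂ} {R₁ R₂ : ℝ}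
    (hf₁ : ∀ w ∈ ball c₂ R₂, DifferentiableOn ℂ (f · w) (ball c₁ R₁))
    (hf₂ : ∀ z ∈ ball c₁ R₁, DifferentiableOn ℂ (f z) (ball c₂ R₂))
    (hf : ∀ z ∈ ball c₁ R₁, ∀ w ∈ ball c₂ R₂, ‖f z w‖ ≤ 1)
    (hz : z ∈ ball c₁ R₁) (hw : w ∈ ball c₂ R₂) (m k : ℕ) :
    ‖iteratedDeriv (m + 1) (fun z' ↦ iteratedDeriv (k + 1) (f z') w) z‖ ≤
      (m + 1)! * R₁ / ((R₁ ^ 2 - ‖z - c₁‖ ^ 2) * (R₁ - ‖z - c₁‖) ^ m) *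
        ((k + 1)! * R₂ / ((R₂ ^ 2 - ‖w - c₂‖ ^ 2) * (R₂ - ‖w - c₂‖) ^ k) *
          (1 - ‖f z w‖ ^ 2)) := by
  have hR₂ := pos_of_mem_ball hw
  have hwR := mem_ball_iff_norm.1 hw
  have : 0 < R₂ - ‖w - c₂‖ := sub_pos.2 hwR
  have : 0 < R₂ ^ 2 - ‖w - c₂‖ ^ 2 := by nlinarith [norm_nonneg (w - c₂)]
  exact norm_iteratedDeriv_succ_le_of_norm_le_one_sub_sq (by positivity)
    (differentiableOn_iteratedDeriv_param isOpen_ball isOpen_ball hf₁ hf₂ hf hw (k + 1)) (hf₁ w hw)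
    (fun z' hz' ↦ norm_iteratedDeriv_succ_le_one_sub_sq (hf₂ z' hz') (hf z' hz') hw k) hz m

end HigherSchwarzPick

section Arithmetic

open scoped Nat

variable {a b x y t D : ℝ}

lemma factorial_mul_factorial_le (m k : ℕ) :
    ((m + 1)! * (k + 1)! : ℝ) ≤ (m + k)! * (((m + 1 : ℕ) ^ 2 - (m + 1 : ℕ)) +
      2 * (m + 1 : ℕ) * (k + 1 : ℕ) + ((k + 1 : ℕ) ^ 2 - (k + 1 : ℕ))) := by
  calc ((m + 1)! * (k + 1)! : ℝ) ≤ (m + 1 + (k + 1))! := by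
        exact_mod_cast Nat.le_of_dvd (Nat.factorial_pos _)
          (Nat.factorial_mul_factorial_dvd_factorial_add (m + 1) (k + 1))
    _ = _ := by
        rw [add_add_add_comm m, ← add_assoc, Nat.factorial_succ, Nat.factorial_succ]
        push_cast
        ring

lemma add_mul_div_mul_le {p q s : ℝ} (hp : 0 ≤ p) (hq : 0 ≤ q) (hs : 0 ≤ s) (ht : 0 < t)
    (hta : t ≤ a) (htb : t ≤ b) :
    (p + q + s) * (t / (a * b)) ≤ p / a + q / (√a * √b) + s / b := by
  have ha := ht.trans_le hta
  have hb := ht.trans_le htb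
  have hsqrt : t ≤ √a * √b := by
    rw [← Real.sqrt_mul ha.le]
    exact Real.le_sqrt_of_sq_le (by nlinarith)
  calc (p + q + s) * (t / (a * b))
      = p * t / (a * b) + q * t / (a * b) + s * t / (a * b) := by ring
    _ ≤ p * b / (a * b) + q * (√a * √b) / (a * b) + s * a / (a * b) := by gcongr
    _ = p / a + q / (√a * √b) + s / b := by
        have : a * b = (√a * √b) * (√a * √b) := by
          rw [mul_mul_mul_comm, Real.mul_self_sqrt ha.le, Real.mul_self_sqrt hb.le]
        rw [mul_div_mul_right _ _ hb.ne', mul_comm s, mul_div_mul_left _ _ ha.ne', this,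
          mul_div_mul_right _ _ (ht.trans_le hsqrt).ne']

lemma sq_sub_self_nonneg (n : ℕ) : (0 : ℝ) ≤ n ^ 2 - n :=
  sub_nonneg.2 (mod_cast Nat.le_self_pow two_ne_zero n)

lemma pure_derivative_bound_le (k : ℕ) (hD : 0 ≤ D) (ha : 0 < a) (ht : 0 < t) (htx : t ≤ x) :
    (k + 2)! / (a * x ^ (k + 1)) * D ≤
      k ! * (D / t ^ (k + 1)) * (((k + 2 : ℕ) ^ 2 - (k + 2 : ℕ)) / a) := by
  calc (k + 2)! / (a * x ^ (k + 1)) * D ≤ (k + 2)! / (a * t ^ (k + 1)) * D := by gcongr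
    _ = _ := by
      rw [Nat.factorial_succ, Nat.factorial_succ]
      push_cast
      field_simp
      ring

lemma mixed_derivative_bound_le (m k : ℕ) (hD : 0 ≤ D) (ht : 0 < t) (htx : t ≤ x) (hty : t ≤ y)
    (hta : t ≤ a) (htb : t ≤ b) :
    (m + 1)! / (a * x ^ m) * ((k + 1)! / (b * y ^ k) * D) ≤
      (m + k)! * (D / t ^ (m + k + 1)) *
        (((m + 1 : ℕ) ^ 2 - (m + 1 : ℕ)) / a +
          2 * (m + 1 : ℕ) * (k + 1 : ℕ) / (√a * √b) +
          ((k + 1 : ℕ) ^ 2 - (k + 1 : ℕ)) / b) := by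
  have ha := ht.trans_le hta
  have hb := ht.trans_le htb
  have hy := ht.trans_le hty
  calc (m + 1)! / (a * x ^ m) * ((k + 1)! / (b * y ^ k) * D)
      ≤ (m + 1)! / (a * t ^ m) * ((k + 1)! / (b * t ^ k) * D) := by gcongr
    _ = (m + 1)! * (k + 1)! * (D / t ^ (m + k + 1) * (t / (a * b))) := by
        field_simp
        ring
    _ ≤ _ := mul_le_mul_of_nonneg_right (factorial_mul_factorial_le m k) (by positivity)
    _ = (m + k)! * (D / t ^ (m + k + 1)) * ((((m + 1 : ℕ) ^ 2 - (m + 1 : ℕ)) +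
          2 * (m + 1 : ℕ) * (k + 1 : ℕ) + ((k + 1 : ℕ) ^ 2 - (k + 1 : ℕ))) * (t / (a * b))) := by
        ring
    _ ≤ _ := by
        gcongr
        exact add_mul_div_mul_le (sq_sub_self_nonneg _) (by positivity) (sq_sub_self_nonneg _)
          ht hta htb

end Arithmetic

section Bidisk

open Metric

open scoped Nat

theorem anderson_dritschel_rovnyak_general {f : ℂ → ℂ → ℂ}
    (hf₁ : ∀ w ∈ ball (0 : ℂ) 1, DifferentiableOn ℂ (f · w) (ball 0 1))
    (hf₂ : ∀ z ∈ ball (0 : ℂ) 1, DifferentiableOn ℂ (f z) (ball 0 1))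
    (hf : ∀ z ∈ ball (0 : ℂ) 1, ∀ w ∈ ball (0 : ℂ) 1, ‖f z w‖ ≤ 1) {n₁ n₂ : ℕ}
    (hn : 2 ≤ n₁ + n₂) {z w : ℂ} (hz : z ∈ ball (0 : ℂ) 1) (hw : w ∈ ball (0 : ℂ) 1) :
    ‖iteratedDeriv n₁ (fun z' ↦ iteratedDeriv n₂ (f z') w) z‖ ≤
      (n₁ + n₂ - 2)! * ((1 - ‖f z w‖ ^ 2) / (1 - max ‖z‖ ‖w‖) ^ (n₁ + n₂ - 1)) *
        ((n₁ ^ 2 - n₁) / (1 - ‖z‖ ^ 2) +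
          2 * n₁ * n₂ / (√(1 - ‖z‖ ^ 2) * √(1 - ‖w‖ ^ 2)) +
          (n₂ ^ 2 - n₂) / (1 - ‖w‖ ^ 2)) := by
  have hz₁ := mem_ball_zero_iff.1 hz
  have hw₁ := mem_ball_zero_iff.1 hw
  have ht : 0 < 1 - max ‖z‖ ‖w‖ := sub_pos.2 (max_lt hz₁ hw₁)
  have htz : 1 - max ‖z‖ ‖w‖ ≤ 1 - ‖z‖ := sub_le_sub_left (le_max_left _ _) 1
  have htw : 1 - max ‖z‖ ‖w‖ ≤ 1 - ‖w‖ := sub_le_sub_left (le_max_right _ _) 1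
  have hz₂ : 1 - ‖z‖ ≤ 1 - ‖z‖ ^ 2 := by nlinarith [norm_nonneg z]
  have hw₂ : 1 - ‖w‖ ≤ 1 - ‖w‖ ^ 2 := by nlinarith [norm_nonneg w]
  have hD : 0 ≤ 1 - ‖f z w‖ ^ 2 := sub_nonneg.2 (pow_le_one₀ (norm_nonneg _) (hf z hz w hw))
  match n₁, n₂, hn with
  | 0, k + 2, _ =>
    have h := norm_iteratedDeriv_succ_le_one_sub_sq (hf₂ z hz) (hf z hz) hw (k + 1)
    simpa using (h.trans_eq (by simp)).trans
      (pure_derivative_bound_le k hD (ht.trans_le (htw.trans hw₂)) ht htw)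
  | k + 2, 0, _ =>
    have h := norm_iteratedDeriv_succ_le_one_sub_sq (hf₁ w hw) (hf · · w hw) hz (k + 1)
    simpa using (h.trans_eq (by simp)).trans
      (pure_derivative_bound_le k hD (ht.trans_le (htz.trans hz₂)) ht htz)
  | m + 1, k + 1, _ =>
    have h := norm_iteratedDeriv_iteratedDeriv_succ_le hf₁ hf₂ hf hz hw m k
    have hn₁ : m + 1 + (k + 1) - 1 = m + k + 1 := by lia
    have hn₂ : m + 1 + (k + 1) - 2 = m + k := by lia
    rw [hn₁, hn₂]
    exact (h.trans_eq (by simp)).trans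
      (mixed_derivative_bound_le m k hD ht htz htw (htz.trans hz₂) (htw.trans hw₂))

end Bidisk

/-- **Anderson–Dritschel–Rovnyak higher-derivative Schwarz lemma on the bidisk.**
If `f` is analytic on `𝔻²` with `sup_{𝔻²}|f| ≤ 1`, `n = n₁ + n₂ ≥ 2`, and
`λ = (z, w) ∈ 𝔻²` with `|λ| = max(|z|, |w|)`, then
`|∂ⁿf/(∂zⁿ¹∂wⁿ²)(λ)| ≤ (n-2)! (1-|f(λ)|²)/(1-|λ|)^{n-1} ·
  [(n₁²-n₁)/(1-|z|²) + 2n₁n₂/(√(1-|z|²)√(1-|w|²)) + (n₂²-n₂)/(1-|w|²)]`. -/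
theorem anderson_dritschel_rovnyak (f : ℂ × ℂ → ℂ)
    (hf : DifferentiableOn ℂ f Bidisk) (hb : ∀ lam ∈ Bidisk, ‖f lam‖ ≤ 1)
    (n₁ n₂ n : ℕ) (hn : n = n₁ + n₂) (hn2 : 2 ≤ n)
    (z w : ℂ) (hzw : (z, w) ∈ Bidisk) :
    ‖iteratedDeriv n₁ (fun z' : ℂ => iteratedDeriv n₂ (fun w' : ℂ => f (z', w')) w) z‖ ≤
      (Nat.factorial (n - 2) : ℝ) *
        ((1 - ‖f (z, w)‖ ^ 2) / (1 - max ‖z‖ ‖w‖) ^ (n - 1)) *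
        (((n₁ : ℝ) ^ 2 - (n₁ : ℝ)) / (1 - ‖z‖ ^ 2) +
          2 * (n₁ : ℝ) * (n₂ : ℝ) /
            (Real.sqrt (1 - ‖z‖ ^ 2) * Real.sqrt (1 - ‖w‖ ^ 2)) +
          ((n₂ : ℝ) ^ 2 - (n₂ : ℝ)) / (1 - ‖w‖ ^ 2)) := by
  subst hn
  have hmem {z' w' : ℂ} (hz' : z' ∈ Metric.ball 0 1) (hw' : w' ∈ Metric.ball 0 1) :
      (z', w') ∈ Bidisk := ⟨mem_ball_zero_iff.1 hz', mem_ball_zero_iff.1 hw'⟩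
  exact anderson_dritschel_rovnyak_general (f := fun z' w' ↦ f (z', w'))
    (fun w' hw' ↦ hf.comp (by fun_prop) fun z' hz' ↦ hmem hz' hw')
    (fun z' hz' ↦ hf.comp (by fun_prop) fun w' hw' ↦ hmem hz' hw')
    (fun z' hz' w' hw' ↦ hb _ (hmem hz' hw')) hn2
    (mem_ball_zero_iff.2 hzw.1) (mem_ball_zero_iff.2 hzw.2)
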